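/- arXiv:2211.08242 — 3 statements merged into one kernel-verified Lean document; each statement's English description precedes it below -/
import Mathlib

section
/- Let V be a separable real Hilbert space and V' a real normed vector space. For every continuous map f : V → V' there exists a sequence (f_n) of maps f_n : V → V', each of which is Lipschitz continuous and has bounded range, such that f_n converges to f uniformly on every compact subset of V. -/
/-!
Given a finite set `t` of sample points and a slack `r > 0`, replace `f x` by an average of the
values of `f` at those points of `t` that are within `r` of being nearest to `x`. The weights are
Lipschitz and their sum is at least `r`, so the average is Lipschitz in `x`, and it stays in the
convex hull of finitely many values of `f`. Along an increasing sequence of samples with dense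
union, every compact set is eventually covered by arbitrarily small balls around the samples;
letting also `r → 0`, only points arbitrarily close to `x` contribute, and uniform continuity of `f`
near the compact set concludes.
-/

open Filter Metric Set TopologicalSpace Topology
open scoped NNReal

section Lipschitz

variable {α E ι : Type*} [PseudoMetricSpace α] [SeminormedAddCommGroup E]

lemma lipschitzWith_finset_sum {t : Finset ι} {f : ι → α → E} {K : ι → ℝ≥0}
    (hf : ∀ i ∈ t, LipschitzWith (K i) (f i)) :
    LipschitzWith (∑ i ∈ t, K i) fun x ↦ ∑ i ∈ t, f i x :=
  .of_dist_le_mul fun x y ↦ by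
    rw [NNReal.coe_sum, Finset.sum_mul]
    exact dist_sum_sum_le_of_le t fun i hi ↦ (hf i hi).dist_le_mul x y

lemma lipschitzWith_div_of_abs_le {g h : α → ℝ} {K L c : ℝ≥0} (hc : 0 < c)
    (hg : LipschitzWith K g) (hh : LipschitzWith L h) (hgh : ∀ x, |g x| ≤ h x)
    (hch : ∀ x, c ≤ h x) : LipschitzWith ((K + L) / c) fun x ↦ g x / h x := by
  have h_pos (x : α) : 0 < h x := (NNReal.coe_pos.2 hc).trans_le (hch x)
  refine .of_dist_le_mul fun x y ↦ ?_
  have ratio_sub_ratio :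
      g x / h x - g y / h y = (g x - g y + g y / h y * (h y - h x)) / h x := by
    have hx := (h_pos x).ne'
    have hy := (h_pos y).ne'
    field_simp
    ring
  have ratio_le : |g y / h y| ≤ 1 := by
    rw [abs_div, abs_of_pos (h_pos y)]
    exact div_le_one_of_le₀ (hgh y) (h_pos y).le
  have numerator_le : |g x - g y + g y / h y * (h y - h x)| ≤ (K + L) * dist x y := calc
    _ ≤ |g x - g y| + |g y / h y| * |h y - h x| := by
      rw [← abs_mul]
      exact abs_add_le _ _
    _ ≤ K * dist x y + 1 * (L * dist x y) := by
      gcongr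
      · exact hg.dist_le_mul x y
      · simpa only [Real.dist_eq, dist_comm y x] using hh.dist_le_mul y x
    _ = (K + L) * dist x y := by ring
  calc
    dist (g x / h x) (g y / h y) = |g x - g y + g y / h y * (h y - h x)| / h x := by
      rw [Real.dist_eq, ratio_sub_ratio, abs_div, abs_of_pos (h_pos x)]
    _ ≤ (K + L) * dist x y / c := div_le_div₀ (by positivity) numerator_le hc (hch x)
    _ = ((K + L) / c : ℝ≥0) * dist x y := by
      push_cast
      ring

lemma lipschitzWith_smul_const [NormedSpace ℝ E] {g : α → ℝ} {K : ℝ≥0} (hg : LipschitzWith K g)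
    (z : E) : LipschitzWith (K * ‖z‖₊) fun x ↦ g x • z :=
  .of_dist_le_mul fun x y ↦ by
    rw [dist_eq_norm, ← sub_smul, norm_smul, ← dist_eq_norm, NNReal.coe_mul, coe_nnnorm,
      mul_right_comm]
    gcongr
    exact hg.dist_le_mul x y

lemma lipschitzWith_centerMass [NormedSpace ℝ E] {t : Finset ι} {w : ι → α → ℝ} {K : ι → ℝ≥0}
    {c : ℝ≥0} (hc : 0 < c) (hw : ∀ i ∈ t, LipschitzWith (K i) (w i))
    (hw_nonneg : ∀ i ∈ t, ∀ x, 0 ≤ w i x) (hw_sum : ∀ x, c ≤ ∑ i ∈ t, w i x) (z : ι → E) :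
    LipschitzWith (∑ i ∈ t, (K i + ∑ j ∈ t, K j) / c * ‖z i‖₊)
      fun x ↦ t.centerMass (w · x) z := by
  simp only [Finset.centerMass, Finset.smul_sum, smul_smul, inv_mul_eq_div]
  refine lipschitzWith_finset_sum fun i hi ↦ lipschitzWith_smul_const ?_ (z i)
  refine lipschitzWith_div_of_abs_le hc (hw i hi) (lipschitzWith_finset_sum hw) (fun x ↦ ?_) hw_sum
  rw [abs_of_nonneg (hw_nonneg i hi x)]
  exact Finset.single_le_sum (fun j hj ↦ hw_nonneg j hj x) hi

end Lipschitz

lemma centerMass_mem_of_forall_ne_zero {𝕜 E ι : Type*} [Field 𝕜] [LinearOrder 𝕜]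
    [IsStrictOrderedRing 𝕜] [AddCommGroup E] [Module 𝕜 E] {s : Set E} (hs : Convex 𝕜 s)
    {t : Finset ι} {w : ι → 𝕜} {z : ι → E} (hw : ∀ i ∈ t, 0 ≤ w i) (hw_sum : 0 < ∑ i ∈ t, w i)
    (hz : ∀ i ∈ t, w i ≠ 0 → z i ∈ s) : t.centerMass w z ∈ s := by
  rw [← Finset.centerMass_filter_ne_zero]
  refine hs.centerMass_mem (fun i hi ↦ hw i (Finset.mem_of_mem_filter i hi)) ?_ fun i hi ↦
    hz i (Finset.mem_of_mem_filter i hi) (Finset.mem_filter.1 hi).2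
  rwa [Finset.sum_filter_ne_zero]

lemma eventually_subset_thickening_of_isCompact {α ι : Type*} [PseudoEMetricSpace α] [Preorder ι]
    [IsDirectedOrder ι] [Nonempty ι] {t : ι → Set α} (ht : Monotone t) {K : Set α}
    (hK : IsCompact K) (hKt : K ⊆ closure (⋃ i, t i)) {δ : ℝ} (hδ : 0 < δ) :
    ∀ᶠ i in atTop, K ⊆ thickening δ (t i) := by
  have thickening_mono : Monotone fun i ↦ thickening δ (t i) :=
    fun _ _ hij ↦ thickening_subset_of_subset δ (ht hij)
  have cover : K ⊆ ⋃ i, thickening δ (t i) := by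
    rw [← thickening_iUnion]
    exact hKt.trans (closure_subset_thickening hδ _)
  obtain ⟨i, hi⟩ := hK.elim_directed_cover _ (fun _ ↦ isOpen_thickening) cover
    thickening_mono.directed_le
  filter_upwards [eventually_ge_atTop i] with j hij using hi.trans (thickening_mono hij)

section NearbyAverage

variable {α E : Type*} [PseudoMetricSpace α]

/-- The weight of the sample point `y ∈ t` at `x`: it is positive exactly when `dist x y` exceeds
the distance from `x` to `t` by less than the slack `r`, so that some weight is at least `r`
wherever `x` lies, however far from `t`. -/
noncomputable def nearbyWeight (t : Finset α) (r : ℝ) (y x : α) : ℝ :=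
  max 0 (infDist x t + r - dist x y)

lemma nearbyWeight_nonneg (t : Finset α) (r : ℝ) (y x : α) : 0 ≤ nearbyWeight t r y x :=
  le_max_left _ _

lemma dist_lt_of_nearbyWeight_ne_zero {t : Finset α} {r : ℝ} {y x : α}
    (h : nearbyWeight t r y x ≠ 0) : dist x y < infDist x t + r := by
  contrapose! h
  exact max_eq_left (sub_nonpos.2 h)

lemma lipschitzWith_nearbyWeight (t : Finset α) (r : ℝ) (y : α) :
    LipschitzWith 2 (nearbyWeight t r y) := by
  have h := ((lipschitz_infDist_pt (t : Set α)).add (.const r)).sub (.dist_left y)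
  rw [add_zero, one_add_one_eq_two] at h
  exact h.const_max 0

lemma le_sum_nearbyWeight {t : Finset α} (ht : t.Nonempty) (r : ℝ) (x : α) :
    r ≤ ∑ y ∈ t, nearbyWeight t r y x := by
  obtain ⟨y, hy, hxy⟩ := t.finite_toSet.isCompact.exists_infDist_eq_dist ht x
  calc
    r = infDist x t + r - dist x y := by rw [hxy]; ring
    _ ≤ nearbyWeight t r y x := le_max_right _ _
    _ ≤ ∑ y ∈ t, nearbyWeight t r y x :=
      Finset.single_le_sum (f := (nearbyWeight t r · x)) (fun y _ ↦ nearbyWeight_nonneg t r y x) hy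

variable [SeminormedAddCommGroup E] [NormedSpace ℝ E]

/-- The approximation of `f` determined by its values on the finite sample `t`: at `x`, the weighted
average of `f` over the points of `t` that are nearest to `x` up to the slack `r`. -/
noncomputable def nearbyAverage (t : Finset α) (r : ℝ) (f : α → E) (x : α) : E :=
  t.centerMass (nearbyWeight t r · x) f

variable {t : Finset α} {r : ℝ}

lemma exists_lipschitzWith_nearbyAverage (ht : t.Nonempty) (hr : 0 < r) (f : α → E) :
    ∃ K : ℝ≥0, LipschitzWith K (nearbyAverage t r f) :=
  ⟨_, lipschitzWith_centerMass (c := ⟨r, hr.le⟩) hr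
    (fun y _ ↦ lipschitzWith_nearbyWeight t r y) (fun y _ ↦ nearbyWeight_nonneg t r y)
    (le_sum_nearbyWeight ht r) f⟩

lemma nearbyAverage_mem {s : Set E} (hs : Convex ℝ s) (ht : t.Nonempty) (hr : 0 < r) {f : α → E}
    {x : α} (hf : ∀ y ∈ t, dist x y < infDist x t + r → f y ∈ s) : nearbyAverage t r f x ∈ s :=
  centerMass_mem_of_forall_ne_zero hs (fun y _ ↦ nearbyWeight_nonneg t r y x)
    (hr.trans_le (le_sum_nearbyWeight ht r x)) fun y hy h ↦
      hf y hy (dist_lt_of_nearbyWeight_ne_zero h)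

lemma isBounded_range_nearbyAverage (ht : t.Nonempty) (hr : 0 < r) (f : α → E) :
    Bornology.IsBounded (range (nearbyAverage t r f)) := by
  have hull_bounded : Bornology.IsBounded (convexHull ℝ (f '' t)) :=
    isBounded_convexHull.2 (t.finite_toSet.image f).isBounded
  refine hull_bounded.subset (range_subset_iff.2 fun x ↦ ?_)
  exact nearbyAverage_mem (convex_convexHull ℝ _) ht hr fun y hy _ ↦
    subset_convexHull ℝ _ (mem_image_of_mem f hy)

lemma tendstoUniformlyOn_nearbyAverage {ι : Type*} [Preorder ι] [IsDirectedOrder ι] [Nonempty ι]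
    {t : ι → Finset α} (ht : Monotone t) (ht_ne : ∀ i, (t i).Nonempty) {r : ι → ℝ}
    (hr : ∀ i, 0 < r i) (hr_lim : Tendsto r atTop (𝓝 0)) {f : α → E} {K : Set α}
    (hK : IsCompact K) (hKt : K ⊆ closure (⋃ i, (t i : Set α))) (hf : ∀ x ∈ K, ContinuousAt f x) :
    TendstoUniformlyOn (fun i ↦ nearbyAverage (t i) (r i) f) f atTop K := by
  rw [Metric.tendstoUniformlyOn_iff]
  intro ε hε
  obtain ⟨δ, hδ, hfδ⟩ := Metric.mem_uniformity_dist.1 <|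
    hK.uniformContinuousAt_of_continuousAt f hf (Metric.dist_mem_uniformity hε)
  filter_upwards [hr_lim.eventually_lt_const (half_pos hδ),
    eventually_subset_thickening_of_isCompact (fun _ _ hij ↦ Finset.coe_subset.2 (ht hij)) hK hKt
      (half_pos hδ)] with i hri hKi x hx
  have infDist_lt : infDist x (t i) < δ / 2 :=
    (mem_thickening_iff_infDist_lt (ht_ne i)).1 (hKi hx)
  rw [dist_comm, ← mem_ball]
  refine nearbyAverage_mem (convex_ball (f x) ε) (ht_ne i) (hr i) fun y _ hxy ↦ ?_
  rw [mem_ball, dist_comm]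
  exact hfδ (by linarith) hx

end NearbyAverage

lemma exists_monotone_finset_dense_iUnion (α : Type*) [TopologicalSpace α] [SeparableSpace α]
    [Nonempty α] : ∃ t : ℕ → Finset α, Monotone t ∧ (∀ n, (t n).Nonempty) ∧
      Dense (⋃ n, (t n : Set α)) := by
  classical
  refine ⟨fun n ↦ (Finset.range (n + 1)).image (denseSeq α), fun m n hmn ↦ ?_, fun n ↦ ?_, ?_⟩
  · exact Finset.image_subset_image (Finset.range_mono (Nat.succ_le_succ hmn))
  · exact Finset.nonempty_range_add_one.image _
  · refine (denseRange_denseSeq α).mono (range_subset_iff.2 fun n ↦ mem_iUnion.2 ⟨n, ?_⟩)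
    exact Finset.mem_image_of_mem _ (Finset.self_mem_range_succ n)

theorem stmt_0_general {α E : Type*} [PseudoMetricSpace α] [SeparableSpace α]
    [SeminormedAddCommGroup E] [NormedSpace ℝ E] (f : α → E) (hf : Continuous f) :
    ∃ F : ℕ → α → E,
      (∀ n, ∃ K : ℝ≥0, LipschitzWith K (F n)) ∧
      (∀ n, Bornology.IsBounded (range (F n))) ∧
      (∀ K : Set α, IsCompact K → TendstoUniformlyOn F f atTop K) := by
  rcases isEmpty_or_nonempty α with _ | _
  · exact ⟨fun _ ↦ f, fun _ ↦ ⟨0, fun x ↦ isEmptyElim x⟩, fun _ ↦ (finite_range f).isBounded,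
      fun K _ _ _ ↦ .of_forall fun _ x ↦ isEmptyElim x⟩
  obtain ⟨t, ht_mono, ht_ne, ht_dense⟩ := exists_monotone_finset_dense_iUnion α
  have slack_pos (n : ℕ) : (0 : ℝ) < 1 / (n + 1) := Nat.one_div_pos_of_nat
  exact ⟨fun n ↦ nearbyAverage (t n) (1 / (n + 1)) f,
    fun n ↦ exists_lipschitzWith_nearbyAverage (ht_ne n) (slack_pos n) f,
    fun n ↦ isBounded_range_nearbyAverage (ht_ne n) (slack_pos n) f,
    fun K hK ↦ tendstoUniformlyOn_nearbyAverage ht_mono ht_ne slack_pos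
      tendsto_one_div_add_atTop_nhds_zero_nat hK (ht_dense.closure_eq ▸ subset_univ K)
      fun _ _ ↦ hf.continuousAt⟩

/-- Let `V` be a separable real Hilbert space and `V'` a real normed space. For
every continuous map `f : V → V'` there exists a sequence of Lipschitz maps
`F n : V → V'` with bounded range converging to `f` uniformly on every compact
subset of `V`. -/
theorem stmt_0 {V V' : Type*} [NormedAddCommGroup V] [InnerProductSpace ℝ V]
    [CompleteSpace V] [TopologicalSpace.SeparableSpace V]
    [NormedAddCommGroup V'] [NormedSpace ℝ V']
    (f : V → V') (hf : Continuous f) :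
    ∃ F : ℕ → V → V',
      (∀ n, ∃ K : NNReal, LipschitzWith K (F n)) ∧
      (∀ n, Bornology.IsBounded (Set.range (F n))) ∧
      (∀ K : Set V, IsCompact K → TendstoUniformlyOn (fun n x => F n x) f Filter.atTop K) :=
  stmt_0_general f hf
end

section
/- Let (λ_n)_{n≥1} be a sequence of positive real numbers with λ_n ≥ c₀ for some c₀ > 0, and suppose there exists η₀ ∈ (0,1) such that for every η ∈ (0,η₀) the series ∑_{n≥1} λ_n^{−(1−η)} converges. Then for every η ∈ (0,η₀) there exist r ∈ (0,1) and a constant C > 0 such that for all λ > 0 and all t > 0 the series ∑_{n≥1} exp(−2(λ_n+λ)t) converges and satisfies ∑_{n≥1} exp(−2(λ_n+λ)t) ≤ C · λ^{−η} · t^{−r}. -/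
/-!
The factor `exp (-2 l t)` does not depend on the index and comes out of the sum. The inequality
`exp (-x) ≤ (a / e) ^ a * x ^ (-a)`, applied with `a = s` to each `exp (-2 (Λ i) t)` and with
`a = η` to `exp (-2 l t)`, then gives a bound by a multiple of
`(∑ Λ i ^ (-s)) * l ^ (-η) * t ^ (-(s + η))`. Taking `s = 1 - μ` for some `μ` strictly between
`η` and `η₀` makes `s + η < 1`.
-/

open Real

theorem exp_neg_le_mul_rpow_neg {a x : ℝ} (ha : 0 ≤ a) (hx : 0 < x) :
    exp (-x) ≤ (a / exp 1) ^ a * x ^ (-a) := by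
  rcases ha.eq_or_lt with rfl | ha
  · simpa using hx.le
  have rpow_le_exp : (exp 1 * (x / a)) ^ a ≤ exp x :=
    calc (exp 1 * (x / a)) ^ a ≤ exp (x / a) ^ a := by
          gcongr
          exact exp_one_mul_le_exp
      _ = exp x := by rw [← exp_mul, div_mul_cancel₀ x ha.ne']
  calc exp (-x) = (exp x)⁻¹ := exp_neg x
    _ ≤ ((exp 1 * (x / a)) ^ a)⁻¹ := by gcongr
    _ = (a / exp 1 * x⁻¹) ^ a := by
      rw [← inv_rpow (by positivity)]
      congr 1
      field_simp
    _ = (a / exp 1) ^ a * x ^ (-a) := by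
      rw [mul_rpow (by positivity) (by positivity), inv_rpow hx.le, rpow_neg hx.le]

theorem exp_neg_mul_le_rpow_neg_mul {a x t : ℝ} (ha : 0 ≤ a) (hx : 0 < x) (ht : 0 < t) :
    exp (-(x * t)) ≤ x ^ (-a) * ((a / exp 1) ^ a * t ^ (-a)) := by
  refine (exp_neg_le_mul_rpow_neg ha (mul_pos hx ht)).trans_eq ?_
  rw [mul_rpow hx.le ht.le, mul_left_comm]

section SummableRpowNeg

variable {ι : Type*} {Λ : ι → ℝ} {s t : ℝ}

theorem summable_exp_neg_mul_of_summable_rpow_neg (hΛ : ∀ i, 0 < Λ i) (hs : 0 ≤ s)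
    (hsum : Summable fun i ↦ Λ i ^ (-s)) (ht : 0 < t) :
    Summable fun i ↦ exp (-(Λ i * t)) :=
  .of_nonneg_of_le (fun _ ↦ (exp_pos _).le)
    (fun i ↦ exp_neg_mul_le_rpow_neg_mul hs (hΛ i) ht) (hsum.mul_right _)

theorem tsum_exp_neg_mul_le_tsum_rpow_neg_mul (hΛ : ∀ i, 0 < Λ i) (hs : 0 ≤ s)
    (hsum : Summable fun i ↦ Λ i ^ (-s)) (ht : 0 < t) :
    ∑' i, exp (-(Λ i * t)) ≤ (∑' i, Λ i ^ (-s)) * ((s / exp 1) ^ s * t ^ (-s)) := by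
  rw [← tsum_mul_right]
  exact (summable_exp_neg_mul_of_summable_rpow_neg hΛ hs hsum ht).tsum_le_tsum
    (fun i ↦ exp_neg_mul_le_rpow_neg_mul hs (hΛ i) ht) (hsum.mul_right _)

theorem stmt_3_general {η : ℝ} (hΛ : ∀ i, 0 < Λ i) (hs : 0 ≤ s) (hη : 0 ≤ η)
    (hsum : Summable fun i ↦ Λ i ^ (-s)) :
    ∃ C : ℝ, 0 < C ∧ ∀ l t : ℝ, 0 < l → 0 < t →
      Summable (fun i ↦ exp (-(2 * (Λ i + l) * t))) ∧
      ∑' i, exp (-(2 * (Λ i + l) * t)) ≤ C * l ^ (-η) * t ^ (-(s + η)) := by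
  set S := ∑' i, Λ i ^ (-s)
  set K := S * (s / exp 1) ^ s * (η / exp 1) ^ η * 2 ^ (-(s + η)) with hK
  have S_nonneg : 0 ≤ S := tsum_nonneg fun i ↦ rpow_nonneg (hΛ i).le _
  have K_nonneg : 0 ≤ K := by positivity
  -- `K = 0` when `ι` is empty, hence the `+ 1`.
  refine ⟨K + 1, add_pos_of_nonneg_of_pos K_nonneg one_pos, fun l t hl ht ↦ ?_⟩
  have two_mul_t_pos : 0 < 2 * t := by positivity
  have exp_factor (i : ι) :
      exp (-(2 * (Λ i + l) * t)) = exp (-(Λ i * (2 * t))) * exp (-(l * (2 * t))) := by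
    rw [← exp_add]
    ring_nf
  simp only [exp_factor, tsum_mul_right]
  refine ⟨(summable_exp_neg_mul_of_summable_rpow_neg hΛ hs hsum two_mul_t_pos).mul_right _, ?_⟩
  calc (∑' i, exp (-(Λ i * (2 * t)))) * exp (-(l * (2 * t)))
      ≤ S * ((s / exp 1) ^ s * (2 * t) ^ (-s)) *
          (l ^ (-η) * ((η / exp 1) ^ η * (2 * t) ^ (-η))) := by
        gcongr
        · exact tsum_exp_neg_mul_le_tsum_rpow_neg_mul hΛ hs hsum two_mul_t_pos
        · exact exp_neg_mul_le_rpow_neg_mul hη hl two_mul_t_pos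
    _ = K * l ^ (-η) * t ^ (-(s + η)) := by
        simp only [hK, mul_rpow zero_le_two ht.le, neg_add, rpow_add two_pos, rpow_add ht]
        ring
    _ ≤ (K + 1) * l ^ (-η) * t ^ (-(s + η)) := by
        gcongr
        exact le_add_of_nonneg_right zero_le_one

end SummableRpowNeg

/-- Let `(Λ n)` be positive reals bounded below by `c₀ > 0` such that for some
`η₀ ∈ (0,1)` and every `η ∈ (0,η₀)` the series `∑ (Λ n)^(-(1-η))` converges.
Then for every `η ∈ (0,η₀)` there exist `r ∈ (0,1)` and `C > 0` such that for
all `λ > 0` and `t > 0` the series `∑ exp (-2(Λ n + λ) t)` converges with sum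
at most `C * λ^(-η) * t^(-r)`. -/
theorem stmt_3 (Λ : ℕ → ℝ) (c₀ : ℝ) (hc₀ : 0 < c₀) (hΛpos : ∀ n, 0 < Λ n)
    (hΛlb : ∀ n, c₀ ≤ Λ n) (η₀ : ℝ) (hη₀ : η₀ ∈ Set.Ioo (0 : ℝ) 1)
    (hsum : ∀ η ∈ Set.Ioo (0 : ℝ) η₀, Summable (fun n => (Λ n) ^ (-(1 - η)))) :
    ∀ η ∈ Set.Ioo (0 : ℝ) η₀, ∃ r ∈ Set.Ioo (0 : ℝ) 1, ∃ C : ℝ, 0 < C ∧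
      ∀ l t : ℝ, 0 < l → 0 < t →
        Summable (fun n => Real.exp (-(2 * (Λ n + l) * t))) ∧
        ∑' n, Real.exp (-(2 * (Λ n + l) * t)) ≤ C * l ^ (-η) * t ^ (-r) := by
  rintro η ⟨hη, hηη₀⟩
  obtain ⟨μ, hημ, hμη₀⟩ := exists_between hηη₀
  have hμ : μ < 1 := hμη₀.trans hη₀.2
  exact ⟨1 - μ + η, ⟨by linarith, by linarith⟩,
    stmt_3_general hΛpos (by linarith) hη.le (hsum μ ⟨hη.trans hημ, hμη₀⟩)⟩
end

section
/- Let μ and ν be probability measures on a measurable space (X, 𝓑) with μ absolutely continuous with respect to ν and with finite relative entropy H(μ|ν) = ∫_X log(dμ/dν) dμ. Then for every measurable set A ∈ 𝓑 and every real number N > 1, one has ν(A) ≥ μ(A)/N − (H(μ|ν) + log 2)/(N · log N). -/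
open MeasureTheory

/-!
The functions `klFun x = x log x + 1 - x` and `exp y - 1` are convex conjugates. Integrating the
resulting Young inequality `x * y ≤ klFun x + (exp y - 1)` against `ν` with `x = dμ/dν` gives the
variational bound `∫ g ∂μ ≤ H(μ|ν) + ∫ (exp g - 1) ∂ν`. For `g = log N · 𝟙_A` it reads
`μ(A) log N ≤ H(μ|ν) + (N - 1) ν(A)`, and `N - 1 ≤ N log N`.
-/

section EntropyInequality

open InformationTheory

lemma mul_le_klFun_add_exp_sub_one {x : ℝ} (hx : 0 ≤ x) (y : ℝ) :
    x * y ≤ klFun x + (Real.exp y - 1) := by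
  rcases hx.eq_or_lt with rfl | hx
  · simpa [klFun_apply] using Real.exp_nonneg y
  have tangent : y - Real.log x + 1 ≤ Real.exp y / x := by
    simpa only [Real.exp_sub, Real.exp_log hx] using Real.add_one_le_exp (y - Real.log x)
  rw [le_div_iff₀ hx] at tangent
  rw [klFun_apply]
  linarith

variable {X : Type*} [MeasurableSpace X] {μ ν : Measure X} [IsFiniteMeasure μ] [IsFiniteMeasure ν]

lemma integral_le_toReal_klDiv_add_integral_exp_sub_one (h : klDiv μ ν ≠ ⊤) {g : X → ℝ}
    (hg : Integrable g μ) (hexp : Integrable (fun x ↦ Real.exp (g x) - 1) ν) :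
    ∫ x, g x ∂μ ≤ (klDiv μ ν).toReal + ∫ x, (Real.exp (g x) - 1) ∂ν := by
  obtain ⟨hac, hllr⟩ := klDiv_ne_top_iff.mp h
  have hkl : Integrable (fun x ↦ klFun (μ.rnDeriv ν x).toReal) ν :=
    (integrable_klFun_rnDeriv_iff hac).mpr hllr
  calc ∫ x, g x ∂μ
      = ∫ x, (μ.rnDeriv ν x).toReal * g x ∂ν := (integral_toReal_rnDeriv_mul hac).symm
    _ ≤ ∫ x, (klFun (μ.rnDeriv ν x).toReal + (Real.exp (g x) - 1)) ∂ν :=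
      integral_mono ((integrable_rnDeriv_smul_iff hac).mpr hg) (hkl.add hexp)
        fun x ↦ mul_le_klFun_add_exp_sub_one ENNReal.toReal_nonneg (g x)
    _ = (klDiv μ ν).toReal + ∫ x, (Real.exp (g x) - 1) ∂ν := by
      rw [integral_add hkl hexp, toReal_klDiv_eq_integral_klFun hac]

lemma mul_measureReal_le_toReal_klDiv_add (h : klDiv μ ν ≠ ⊤) {A : Set X} (hA : MeasurableSet A)
    (t : ℝ) : t * μ.real A ≤ (klDiv μ ν).toReal + (Real.exp t - 1) * ν.real A := by
  have exp_indicator_sub_one (x : X) :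
      Real.exp (A.indicator (fun _ ↦ t) x) - 1 = A.indicator (fun _ ↦ Real.exp t - 1) x := by
    by_cases hx : x ∈ A <;> simp [hx]
  have hexp : Integrable (fun x ↦ Real.exp (A.indicator (fun _ ↦ t) x) - 1) ν := by
    simpa only [exp_indicator_sub_one] using (integrable_const _).indicator hA
  simpa only [exp_indicator_sub_one, integral_indicator_const _ hA, smul_eq_mul, mul_comm] using
    integral_le_toReal_klDiv_add_integral_exp_sub_one h ((integrable_const t).indicator hA) hexp

theorem stmt_14_general (h : klDiv μ ν ≠ ⊤) {A : Set X} (hA : MeasurableSet A) {N : ℝ}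
    (hN : 1 < N) :
    μ.real A / N - (klDiv μ ν).toReal / (N * Real.log N) ≤ ν.real A := by
  have hN₀ : 0 < N := one_pos.trans hN
  have hlog : 0 < Real.log N := Real.log_pos hN
  have entropy_bound : Real.log N * μ.real A ≤ (klDiv μ ν).toReal + (N - 1) * ν.real A := by
    simpa only [Real.exp_log hN₀] using mul_measureReal_le_toReal_klDiv_add h hA (Real.log N)
  have sub_one_le : N - 1 ≤ N * Real.log N := by
    simpa [mul_sub, hN₀.ne'] using
      mul_le_mul_of_nonneg_left (Real.one_sub_inv_le_log_of_pos hN₀) hN₀.le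
  calc μ.real A / N - (klDiv μ ν).toReal / (N * Real.log N)
      = (Real.log N * μ.real A - (klDiv μ ν).toReal) / (N * Real.log N) := by field_simp
    _ ≤ (N * Real.log N * ν.real A) / (N * Real.log N) := by
      gcongr
      linarith [mul_le_mul_of_nonneg_right sub_one_le (measureReal_nonneg (μ := ν) (s := A))]
    _ = ν.real A := mul_div_cancel_left₀ _ (by positivity)

end EntropyInequality

/-- Let `μ` and `ν` be probability measures with `μ ≪ ν` and finite relative
entropy `H(μ|ν) = ∫ log (dμ/dν) dμ`. Then for every measurable set `A` and
every real `N > 1`, one has `ν(A) ≥ μ(A)/N − (H(μ|ν) + log 2)/(N log N)`. -/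
theorem stmt_14 {X : Type*} [MeasurableSpace X] (μ ν : Measure X)
    [IsProbabilityMeasure μ] [IsProbabilityMeasure ν]
    (hac : μ ≪ ν)
    (hint : Integrable (fun x => Real.log (μ.rnDeriv ν x).toReal) μ) :
    ∀ A : Set X, MeasurableSet A → ∀ N : ℝ, 1 < N →
      (ν A).toReal ≥ (μ A).toReal / N -
        ((∫ x, Real.log (μ.rnDeriv ν x).toReal ∂μ) + Real.log 2) / (N * Real.log N) := by
  intro A hA N hN
  have hlog : 0 < Real.log N := Real.log_pos hN
  refine le_trans ?_ (stmt_14_general (InformationTheory.klDiv_ne_top hac hint) hA hN)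
  rw [InformationTheory.toReal_klDiv_of_measure_eq hac (by simp), measureReal_def]
  gcongr
  exact le_add_of_nonneg_right (Real.log_nonneg one_le_two)
end
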